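/- Let g ≥ 1 and let V = ℚ^(2g) with standard basis vectors a_1, b_1, …, a_g, b_g and the standard symplectic form ω determined by ω(a_i, b_i) = 1, ω(a_i, a_j) = ω(b_i, b_j) = 0 for all i, j, and ω(a_i, b_j) = 0 for i ≠ j. For c ∈ V define the symplectic transvection T_c(x) = x + ω(x,c)·c, whose inverse is T_c^{-1}(x) = x − ω(x,c)·c. Let φ = (T_{b_g} ∘ T_{a_g}^{-1}) ∘ ⋯ ∘ (T_{b_2} ∘ T_{a_2}^{-1}) ∘ T_{a_1}. Then the fixed subspace ker(φ − id) is one-dimensional and equals the span of a_1. -/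

import Mathlib

/-- V = ℚ^(2g), presented as pairs of vectors in ℚ^g (the a-coordinates and b-coordinates). -/
abbrev SpV (g : ℕ) := (Fin g → ℚ) × (Fin g → ℚ)

/-- The standard basis vector a_i (1-indexed in the paper; here `stdA g i` for i : ℕ is the
(i+1)-st such vector, i.e. `stdA g 0` is a₁). -/
def stdA (g : ℕ) (i : ℕ) : SpV g := (fun j => if (j : ℕ) = i then 1 else 0, 0)

/-- The standard basis vector b_i (0-indexed: `stdB g 0` is b₁). -/
def stdB (g : ℕ) (i : ℕ) : SpV g := (0, fun j => if (j : ℕ) = i then 1 else 0)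

/-- The standard symplectic form on ℚ^(2g): ω(aᵢ,bᵢ)=1, ω(aᵢ,aⱼ)=ω(bᵢ,bⱼ)=0,
ω(aᵢ,bⱼ)=0 for i ≠ j. -/
noncomputable def stdSymp (g : ℕ) : SpV g →ₗ[ℚ] SpV g →ₗ[ℚ] ℚ :=
  LinearMap.mk₂ ℚ (fun v w => ∑ i, v.1 i * w.2 i - ∑ i, v.2 i * w.1 i)
    (by intro m₁ m₂ n; simp [add_mul, Finset.sum_add_distrib]; ring)
    (by intro c m n; simp only [Prod.smul_fst, Prod.smul_snd, Pi.smul_apply, smul_eq_mul,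
        Finset.mul_sum, mul_assoc, mul_sub])
    (by intro m n₁ n₂; simp [mul_add, Finset.sum_add_distrib]; ring)
    (by intro c m n; simp only [Prod.smul_fst, Prod.smul_snd, Pi.smul_apply, smul_eq_mul,
        Finset.mul_sum, mul_sub, mul_left_comm])

/-- The symplectic transvection along c: x ↦ x + ω(x,c)·c. -/
noncomputable def Tv (g : ℕ) (c : SpV g) : SpV g →ₗ[ℚ] SpV g :=
  LinearMap.id + LinearMap.smulRight ((stdSymp g).flip c) c

/-- The inverse transvection along c: x ↦ x − ω(x,c)·c. -/
noncomputable def TvInv (g : ℕ) (c : SpV g) : SpV g →ₗ[ℚ] SpV g :=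
  LinearMap.id - LinearMap.smulRight ((stdSymp g).flip c) c

/-- φ = (T_{b_g} ∘ T_{a_g}⁻¹) ∘ ⋯ ∘ (T_{b_2} ∘ T_{a_2}⁻¹) ∘ T_{a_1}, written as a product in
the endomorphism monoid of ℚ^(2g) (multiplication is composition). -/
noncomputable def phi (g : ℕ) : Module.End ℚ (SpV g) :=
  (((List.range g).drop 1).reverse.map
      (fun i => (Tv g (stdB g i)) * (TvInv g (stdA g i)))).prod * Tv g (stdA g 0)

/-!
A product `S₁ ⋯ Sₖ` of endomorphisms whose ranges `range (Sᵢ - 1)` are independent fixes only the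
common fixed vectors of the factors: if `S (T x) = x`, then `(S - 1) (T x) = -(T - 1) x` lies in
both `range (S - 1)` and `range (T - 1)`, so both sides vanish. The monodromy `φ` is a product of
transvections along distinct vectors of the standard basis, so its fixed space is the
`ω`-orthogonal complement of these vectors. All basis vectors except `b₁` occur, and that
complement is the line through `a₁`.
-/

open Module LinearMap

section FixedSpaceOfProduct

variable {R M ι : Type*} [Ring R] [AddCommGroup M] [Module R M]

theorem range_mul_sub_one_le (S T : End R M) :
    range (S * T - 1) ≤ range (S - 1) ⊔ range (T - 1) := by
  rintro _ ⟨x, rfl⟩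
  have split : (S * T - 1) x = (S - 1) (T x) + (T - 1) x := by simp
  rw [split]
  exact Submodule.add_mem_sup (mem_range_self _ _) (mem_range_self _ _)

theorem ker_mul_sub_one_of_disjoint_range {S T : End R M}
    (h : Disjoint (range (S - 1)) (range (T - 1))) :
    ker (S * T - 1) = ker (S - 1) ⊓ ker (T - 1) := by
  ext x
  simp only [Submodule.mem_inf, mem_ker]
  have split : (S * T - 1) x = (S - 1) (T x) + (T - 1) x := by simp
  constructor
  · intro hx
    have opposite : (S - 1) (T x) = -(T - 1) x := eq_neg_of_add_eq_zero_left (split ▸ hx)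
    have hSTx : (S - 1) (T x) = 0 := Submodule.disjoint_def.mp h _ (mem_range_self _ _)
      (opposite ▸ neg_mem (mem_range_self _ _))
    have hTx : (T - 1) x = 0 := neg_eq_zero.mp (opposite ▸ hSTx)
    have fixed : T x = x := sub_eq_zero.mp hTx
    exact ⟨fixed ▸ hSTx, hTx⟩
  · rintro ⟨hSx, hTx⟩
    have fixed : T x = x := sub_eq_zero.mp hTx
    rw [split, fixed, hSx, hTx, add_zero]

theorem range_list_prod_sub_one_le (S : ι → End R M) (l : List ι) :
    range ((l.map S).prod - 1) ≤ ⨆ i ∈ l, range (S i - 1) := by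
  induction l with
  | nil => simp
  | cons i l ih =>
    simp only [List.map_cons, List.prod_cons, List.mem_cons, iSup_or, iSup_sup_eq,
      iSup_iSup_eq_left]
    exact (range_mul_sub_one_le _ _).trans (sup_le_sup_left ih _)

theorem ker_list_prod_sub_one_of_iSupIndep {S : ι → End R M}
    (hS : iSupIndep fun i ↦ range (S i - 1)) {l : List ι} (hl : l.Nodup) :
    ker ((l.map S).prod - 1) = ⨅ i ∈ l, ker (S i - 1) := by
  induction l with
  | nil => simp
  | cons i l ih =>
    obtain ⟨hi, hl⟩ := List.nodup_cons.mp hl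
    have disjoint : Disjoint (range (S i - 1)) (range ((l.map S).prod - 1)) :=
      (hS.disjoint_biSup (y := {j | j ∈ l}) hi).mono_right (range_list_prod_sub_one_le S l)
    simp only [List.map_cons, List.prod_cons, List.mem_cons, iInf_or, iInf_inf_eq,
      iInf_iInf_eq_left, ker_mul_sub_one_of_disjoint_range disjoint, ih hl]

end FixedSpaceOfProduct

section Transvection

theorem range_smulRight_le_span_singleton {R M N : Type*} [Semiring R] [AddCommMonoid M]
    [Module R M] [AddCommMonoid N] [Module R N] (f : M →ₗ[R] R) (v : N) :
    range (f.smulRight v) ≤ Submodule.span R {v} := by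
  rintro _ ⟨x, rfl⟩
  exact Submodule.mem_span_singleton.mpr ⟨f x, rfl⟩

theorem ker_smulRight_flip_self {R M N : Type*} [CommRing R] [IsDomain R] [AddCommMonoid M]
    [Module R M] [AddCommGroup N] [Module R N] [IsTorsionFree R N] (B : M →ₗ[R] N →ₗ[R] R)
    (c : N) : ker ((B.flip c).smulRight c) = ker (B.flip c) := by
  ext x
  simp only [mem_ker, smulRight_apply, smul_eq_zero, or_iff_left_iff_imp]
  rintro rfl
  rw [map_zero, LinearMap.zero_apply]

theorem Tv_sub_one {g : ℕ} (c : SpV g) : Tv g c - 1 = ((stdSymp g).flip c).smulRight c :=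
  add_sub_cancel_left _ _

theorem TvInv_sub_one {g : ℕ} (c : SpV g) : TvInv g c - 1 = -((stdSymp g).flip c).smulRight c :=
  sub_sub_cancel_left _ _

end Transvection

theorem iInf_ker_coord_eq_span_singleton {ι R M : Type*} [Semiring R] [AddCommMonoid M]
    [Module R M] (b : Basis ι R M) (i : ι) :
    ⨅ k ≠ i, ker (b.coord k) = Submodule.span R {b i} := by
  ext x
  rw [← Set.image_singleton, b.mem_span_image]
  simp only [Submodule.mem_iInf, mem_ker, Basis.coord_apply, Set.subset_singleton_iff,
    Finset.mem_coe, Finsupp.mem_support_iff]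
  exact forall_congr' fun k ↦ not_imp_comm

section StandardBasis

variable (g : ℕ)

/-- The symplectic basis `a₁, …, a_g, b₁, …, b_g`, with `Sum.inl i` indexing the `a`-vectors and
`Sum.inr i` the `b`-vectors (both counted from zero). -/
noncomputable def stdSympBasis : Basis (Fin g ⊕ Fin g) ℚ (SpV g) :=
  (Pi.basisFun ℚ (Fin g)).prod (Pi.basisFun ℚ (Fin g))

variable {g}

theorem stdSympBasis_inl (i : Fin g) : stdSympBasis g (.inl i) = stdA g i := by
  ext j <;> simp [stdSympBasis, stdA, Pi.single_apply, Fin.ext_iff]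

theorem stdSympBasis_inr (i : Fin g) : stdSympBasis g (.inr i) = stdB g i := by
  ext j <;> simp [stdSympBasis, stdB, Pi.single_apply, Fin.ext_iff]

theorem ker_stdSymp_flip_stdSympBasis (k : Fin g ⊕ Fin g) :
    ker ((stdSymp g).flip (stdSympBasis g k)) = ker ((stdSympBasis g).coord k.swap) := by
  ext x
  rcases k with i | i <;> simp [stdSymp, stdSympBasis, Pi.single_apply]

end StandardBasis

section Monodromy

variable (n : ℕ)

/-- The factor of `φ` along each standard basis vector: the inverse transvection along `aᵢ` for
`i ≥ 2`, the transvection itself along `a₁` and along every `bᵢ`. -/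
noncomputable def twist : Fin (n + 1) ⊕ Fin (n + 1) → End ℚ (SpV (n + 1))
  | .inl i => if i = 0 then Tv (n + 1) (stdA (n + 1) i) else TvInv (n + 1) (stdA (n + 1) i)
  | .inr i => Tv (n + 1) (stdB (n + 1) i)

/-- The word `b_g a_g ⋯ b₂ a₂ a₁` in the indices of the standard basis, for `g = n + 1`, listing
the factors of `φ` from left to right. -/
def twistWord : List (Fin (n + 1) ⊕ Fin (n + 1)) :=
  (List.finRange n).reverse.flatMap (fun i ↦ [.inr i.succ, .inl i.succ]) ++ [.inl 0]

theorem phi_eq_prod_twistWord : phi (n + 1) = ((twistWord n).map (twist n)).prod := by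
  have indices : (List.range (n + 1)).drop 1 = (List.finRange n).map (fun i ↦ (i.succ : ℕ)) := by
    simp [List.range_succ_eq_map, ← List.map_coe_finRange_eq_range]
  simp [phi, indices, twistWord, twist, List.flatMap, List.prod_flatten, Function.comp_def]

variable {n}

theorem mem_twistWord {k : Fin (n + 1) ⊕ Fin (n + 1)} : k ∈ twistWord n ↔ k ≠ .inr 0 := by
  rcases k with i | i <;> cases i using Fin.cases <;>
    simp [twistWord, Fin.succ_ne_zero, (Fin.succ_ne_zero _).symm]

theorem nodup_twistWord : (twistWord n).Nodup := by
  have letters_disjoint : (List.finRange n).reverse.Pairwise fun i j ↦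
      List.Disjoint [Sum.inr i.succ, Sum.inl i.succ] [Sum.inr j.succ, Sum.inl j.succ] :=
    (List.nodup_reverse.mpr (List.nodup_finRange n)).imp fun h ↦ by simp [h.symm]
  refine List.Nodup.append (List.nodup_flatMap.mpr ⟨by simp, letters_disjoint⟩)
    (List.nodup_singleton _) ?_
  simp [(Fin.succ_ne_zero _).symm]

theorem twist_sub_one_eq_or_eq_neg (k : Fin (n + 1) ⊕ Fin (n + 1)) :
    twist n k - 1 = ((stdSymp _).flip (stdSympBasis _ k)).smulRight (stdSympBasis _ k) ∨
      twist n k - 1 = -((stdSymp _).flip (stdSympBasis _ k)).smulRight (stdSympBasis _ k) := by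
  rcases k with i | i
  · simp only [twist, stdSympBasis_inl]
    split_ifs
    · exact .inl (Tv_sub_one _)
    · exact .inr (TvInv_sub_one _)
  · exact .inl (stdSympBasis_inr i ▸ Tv_sub_one _)

theorem range_twist_sub_one_le (k : Fin (n + 1) ⊕ Fin (n + 1)) :
    range (twist n k - 1) ≤ Submodule.span ℚ {stdSympBasis (n + 1) k} := by
  rcases twist_sub_one_eq_or_eq_neg k with h | h <;>
    simpa only [h, range_neg] using range_smulRight_le_span_singleton _ _

theorem ker_twist_sub_one (k : Fin (n + 1) ⊕ Fin (n + 1)) :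
    ker (twist n k - 1) = ker ((stdSymp (n + 1)).flip (stdSympBasis (n + 1) k)) := by
  rcases twist_sub_one_eq_or_eq_neg k with h | h <;>
    simpa only [h, ker_neg] using ker_smulRight_flip_self (stdSymp (n + 1)) _

theorem iSupIndep_range_twist_sub_one : iSupIndep fun k ↦ range (twist n k - 1) :=
  (stdSympBasis (n + 1)).linearIndependent.iSupIndep_span_singleton.mono range_twist_sub_one_le

theorem ker_phi_sub_one : ker (phi (n + 1) - 1) = Submodule.span ℚ {stdA (n + 1) 0} := by
  let b := stdSympBasis (n + 1)
  calc
    ker (phi (n + 1) - 1) = ⨅ k ∈ twistWord n, ker (twist n k - 1) := by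
      rw [phi_eq_prod_twistWord,
        ker_list_prod_sub_one_of_iSupIndep iSupIndep_range_twist_sub_one nodup_twistWord]
    _ = ⨅ k ≠ .inr 0, ker (b.coord k.swap) := by
      simp only [mem_twistWord, ker_twist_sub_one, ker_stdSymp_flip_stdSympBasis, b]
    _ = ⨅ k ≠ .inl 0, ker (b.coord k) :=
      (Equiv.sumComm _ _).iInf_congr fun k ↦ by rcases k with i | i <;> simp
    _ = Submodule.span ℚ {b (.inl 0)} := iInf_ker_coord_eq_span_singleton b _
    _ = Submodule.span ℚ {stdA (n + 1) 0} := by rw [stdSympBasis_inl, Fin.val_zero]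

end Monodromy

/-- For g ≥ 1, the fixed subspace ker(φ − id) is one-dimensional and is spanned by a₁. -/
theorem stmt_2 (g : ℕ) (hg : 1 ≤ g) :
    Module.finrank ℚ (LinearMap.ker (phi g - LinearMap.id)) = 1 ∧
      LinearMap.ker (phi g - LinearMap.id) = Submodule.span ℚ {stdA g 0} := by
  obtain ⟨n, rfl⟩ := Nat.exists_eq_add_of_le' hg
  have fixed_space : ker (phi (n + 1) - LinearMap.id) = Submodule.span ℚ {stdA (n + 1) 0} :=
    ker_phi_sub_one
  have stdA_ne_zero : stdA (n + 1) 0 ≠ 0 := by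
    simpa only [stdSympBasis_inl, Fin.val_zero] using (stdSympBasis (n + 1)).ne_zero (.inl 0)
  exact ⟨fixed_space ▸ finrank_span_singleton stdA_ne_zero, fixed_space⟩
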